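/- arXiv:2304.03319 — 2 statements merged into one kernel-verified Lean document; each statement's English description precedes it below -/
import Mathlib

section
/- Let f, f_n : [0,∞) → [0,∞) (n ∈ ℕ) be non-decreasing, unbounded, right-continuous functions with f strictly increasing, and suppose f_n converges to f locally uniformly. Let v, v_n ≥ 0 be real numbers with v_n → v. Then for every y ≥ 0, sup_{0 ≤ x ≤ y} |f_n→((x − v_n)_+) − f→((x − v)_+)| → 0 as n → ∞, where (u)_+ := max(u, 0). -/
open Set Filter Metric Topology

/-- `f : ℝ → ℝ` represents a non-decreasing, unbounded, right-continuous function
`[0,∞) → [0,∞)`: it is nonnegative, monotone, unbounded and right-continuous on `[0,∞)`. -/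
def IsNDRC (f : ℝ → ℝ) : Prop :=
  (∀ s : ℝ, 0 ≤ s → 0 ≤ f s) ∧ MonotoneOn f (Set.Ici 0) ∧
    (∀ M : ℝ, ∃ s : ℝ, 0 ≤ s ∧ M < f s) ∧
    (∀ s : ℝ, 0 ≤ s → ContinuousWithinAt f (Set.Ici s) s)

/-- The right-continuous inverse `f→(x) = inf {t ≥ 0 : f t > x}`. -/
noncomputable def rcInv (f : ℝ → ℝ) (x : ℝ) : ℝ :=
  sInf {t : ℝ | 0 ≤ t ∧ x < f t}

/-!
If `c < t < f→(x)`, strict monotonicity gives `f t < x`, and if `f→(x) < c`, some `t < c` has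
`x < f t`. These strict inequalities at a single point `t` pass to `fn` and to points `xn → x`, so
`fn→(xn) → f→(x)` whenever `xn → x`. Constant sequences `fn = f` give the continuity of `f→`, and
convergence along all `xn → x` to a continuous limit is locally uniform convergence.
-/

section Inverse

variable {f : ℝ → ℝ} {x t : ℝ}

theorem rcInv_nonneg (f : ℝ → ℝ) (x : ℝ) : 0 ≤ rcInv f x :=
  Real.sInf_nonneg fun _ hs => hs.1

theorem rcInv_le (ht : 0 ≤ t) (hxt : x < f t) : rcInv f x ≤ t :=
  csInf_le ⟨0, fun _ hs => hs.1⟩ ⟨ht, hxt⟩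

theorem le_of_lt_rcInv (ht : 0 ≤ t) (h : t < rcInv f x) : f t ≤ x :=
  not_lt.1 fun hxt => (rcInv_le ht hxt).not_gt h

theorem exists_lt_of_rcInv_lt (hx : ∃ s, 0 ≤ s ∧ x < f s) (h : rcInv f x < t) :
    ∃ s, 0 ≤ s ∧ s < t ∧ x < f s := by
  obtain ⟨s, ⟨hs, hxs⟩, hst⟩ := exists_lt_of_csInf_lt hx h
  exact ⟨s, hs, hst, hxs⟩

theorem le_rcInv (hf : MonotoneOn f (Ici 0)) (hx : ∃ s, 0 ≤ s ∧ x < f s) (ht : 0 ≤ t)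
    (hft : f t ≤ x) : t ≤ rcInv f x :=
  le_csInf hx fun _ hs => (hf.reflect_lt ht hs.1 (hft.trans_lt hs.2)).le

end Inverse

section Convergence

variable {ι : Type*} {l : Filter ι} {f : ℝ → ℝ} {fn : ι → ℝ → ℝ} {x c : ℝ} {xn : ι → ℝ}

theorem eventually_rcInv_lt (hconv : ∀ t, 0 ≤ t → Tendsto (fn · t) l (𝓝 (f t)))
    (hxn : Tendsto xn l (𝓝 x)) (hx : ∃ s, 0 ≤ s ∧ x < f s) (hc : rcInv f x < c) :
    ∀ᶠ n in l, rcInv (fn n) (xn n) < c := by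
  obtain ⟨t, ht, htc, hxt⟩ := exists_lt_of_rcInv_lt hx hc
  filter_upwards [hxn.eventually_lt (hconv t ht) hxt] with n hn
  exact (rcInv_le ht hn).trans_lt htc

theorem eventually_lt_rcInv (hf : StrictMonoOn f (Ici 0)) (hfn : ∀ n, MonotoneOn (fn n) (Ici 0))
    (hconv : ∀ t, 0 ≤ t → Tendsto (fn · t) l (𝓝 (f t))) (hxn : Tendsto xn l (𝓝 x))
    (hx : ∃ s, 0 ≤ s ∧ x < f s) (hc : c < rcInv f x) :
    ∀ᶠ n in l, c < rcInv (fn n) (xn n) := by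
  rcases lt_or_ge c 0 with hc0 | hc0
  · exact .of_forall fun n => hc0.trans_le (rcInv_nonneg _ _)
  obtain ⟨t, hct, htx⟩ := exists_between hc
  obtain ⟨u, htu, hux⟩ := exists_between htx
  have ht : 0 ≤ t := hc0.trans hct.le
  have hu : 0 ≤ u := ht.trans htu.le
  have hft : f t < x := (hf ht hu htu).trans_le (le_of_lt_rcInv hu hux)
  obtain ⟨s, hs, hxs⟩ := hx
  filter_upwards [(hconv t ht).eventually_lt hxn hft, hxn.eventually_lt (hconv s hs) hxs]
    with n hnt hns
  exact hct.trans_le (le_rcInv (hfn n) ⟨s, hs, hns⟩ ht hnt.le)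

theorem tendsto_rcInv (hf : StrictMonoOn f (Ici 0)) (hfn : ∀ n, MonotoneOn (fn n) (Ici 0))
    (hconv : ∀ t, 0 ≤ t → Tendsto (fn · t) l (𝓝 (f t))) (hxn : Tendsto xn l (𝓝 x))
    (hx : ∃ s, 0 ≤ s ∧ x < f s) :
    Tendsto (fun n => rcInv (fn n) (xn n)) l (𝓝 (rcInv f x)) :=
  tendsto_order.2 ⟨fun _ => eventually_lt_rcInv hf hfn hconv hxn hx,
    fun _ => eventually_rcInv_lt hconv hxn hx⟩

theorem continuous_rcInv (hf : StrictMonoOn f (Ici 0)) (hunb : ∀ M, ∃ s, 0 ≤ s ∧ M < f s) :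
    Continuous (rcInv f) :=
  continuous_iff_continuousAt.2 fun x =>
    tendsto_rcInv hf (fun _ => hf.monotoneOn) (fun _ _ => tendsto_const_nhds) tendsto_id (hunb x)

end Convergence

theorem tendstoLocallyUniformly_of_tendsto_prod_nhds {ι X Y : Type*} [TopologicalSpace X]
    [UniformSpace Y] {l : Filter ι} {F : ι → X → Y} {g : X → Y} (hg : Continuous g)
    (hF : ∀ x, Tendsto (fun p : ι × X => F p.1 p.2) (l ×ˢ 𝓝 x) (𝓝 (g x))) :
    TendstoLocallyUniformly F g l :=
  tendstoLocallyUniformly_iff_forall_tendsto.2 fun x =>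
    (((hg.tendsto x).comp tendsto_snd).prodMk_nhds (hF x)).mono_right (nhds_le_uniformity _)

theorem stmt6_general {ι : Type*} {l : Filter ι} {f : ℝ → ℝ} {fn : ι → ℝ → ℝ}
    (hf : StrictMonoOn f (Ici 0)) (hunb : ∀ M, ∃ s, 0 ≤ s ∧ M < f s)
    (hfn : ∀ n, MonotoneOn (fn n) (Ici 0))
    (hconv : ∀ t, 0 ≤ t → Tendsto (fn · t) l (𝓝 (f t)))
    {v : ℝ} {vn : ι → ℝ} (hvn : Tendsto vn l (𝓝 v)) :
    TendstoLocallyUniformly (fun n x => rcInv (fn n) (max (x - vn n) 0))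
      (fun x => rcInv f (max (x - v) 0)) l := by
  refine tendstoLocallyUniformly_of_tendsto_prod_nhds
    ((continuous_rcInv hf hunb).comp (by fun_prop)) fun x => ?_
  have hshift : Tendsto (fun p : ι × ℝ => max (p.2 - vn p.1) 0) (l ×ˢ 𝓝 x)
      (𝓝 (max (x - v) 0)) :=
    (tendsto_snd.sub (hvn.comp tendsto_fst)).max tendsto_const_nhds
  exact tendsto_rcInv hf (fun p => hfn p.1) (fun t ht => (hconv t ht).comp tendsto_fst) hshift
    (hunb _)

/-- Let `fn` be non-decreasing, unbounded, right-continuous functions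
`[0,∞) → [0,∞)` converging locally uniformly to such a function `f` which is strictly
increasing, and let `vn → v` be nonnegative reals.  Then for every `y ≥ 0`,
`sup_{0 ≤ x ≤ y} |fn→((x − vn)₊) − f→((x − v)₊)| → 0`. -/
theorem stmt6 (f : ℝ → ℝ) (fn : ℕ → ℝ → ℝ)
    (hf : IsNDRC f) (hfn : ∀ n, IsNDRC (fn n))
    (hstrict : StrictMonoOn f (Set.Ici 0))
    (hconv : ∀ t : ℝ, 0 ≤ t → TendstoUniformlyOn fn f atTop (Set.Icc 0 t))
    (v : ℝ) (vn : ℕ → ℝ) (hv : 0 ≤ v) (hvn : ∀ n, 0 ≤ vn n)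
    (hvconv : Tendsto vn atTop (𝓝 v)) :
    ∀ y : ℝ, 0 ≤ y →
      TendstoUniformlyOn (fun n x => rcInv (fn n) (max (x - vn n) 0))
        (fun x => rcInv f (max (x - v) 0)) atTop (Set.Icc 0 y) := by
  intro _ _
  exact (tendstoLocallyUniformlyOn_iff_tendstoUniformlyOn_of_compact isCompact_Icc).1
    (stmt6_general hstrict hf.2.2.1 (fun n => (hfn n).2.1)
      (fun t ht => (hconv t ht).tendsto_at ⟨ht, le_rfl⟩) hvconv).tendstoLocallyUniformlyOn
end

section
/- Let α > 0, let X be a random variable with the exponential distribution of rate 1, and let A ≥ 0 be a random variable independent of X with E[A^{α+δ}] < ∞ for some δ > 0. Then lim_{x→∞} x^{α} · P(A·X^{−1/α} > x and X^{−1/α} > x) = E[A^{α}·1_{{A ≤ 1}}] + P(A > 1). -/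
open Set Filter Topology MeasureTheory ProbabilityTheory

/-!
For `x ≥ 0` and `a ≥ 0` one has `a * y > x` and `y > x` together if and only if
`min a 1 * y > x`, so the joint tail is the tail of the product `min A 1 * Y` with
`Y = X ^ (-1 / α)`.  The tail of `Y` satisfies `x ^ α * P(Y > x) → 1`, because `P(X < t) / t → 1`
as `t → 0+`.  Breiman's lemma then gives the limit `E[(min A 1) ^ α]`: condition on `A`, rescale
the tail of `Y`, and use dominated convergence.
-/

section

variable {Ω : Type*} [MeasurableSpace Ω] {μ : Measure Ω}

section PowerTail

/-- The random variable `Y` has a Pareto-type upper tail of index `α` and constant `c`, that is,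
`P(Y > x) ∼ c * x ^ (-α)` as `x → ∞`.  The condition is stated as convergence of `x ^ α * P(Y > x)`
to `c`, so that it also makes sense for `c = 0`. -/
def HasPowerTail (μ : Measure Ω) (Y : Ω → ℝ) (α c : ℝ) : Prop :=
  Tendsto (fun x : ℝ => x ^ α * μ.real {ω | x < Y ω}) atTop (𝓝 c)

variable {Y : Ω → ℝ} {α c : ℝ}

theorem rpow_mul_measureReal_lt_const_mul {b x : ℝ} (hb : 0 < b) (hx : 0 ≤ x) :
    x ^ α * μ.real {ω | x < b * Y ω} = b ^ α * ((x / b) ^ α * μ.real {ω | x / b < Y ω}) := by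
  simp only [div_lt_iff₀' hb]
  rw [← mul_assoc, ← Real.mul_rpow hb.le (by positivity), mul_div_cancel₀ x hb.ne']

theorem HasPowerTail.const_mul (hY : HasPowerTail μ Y α c) (hα : α ≠ 0) {b : ℝ} (hb : 0 ≤ b) :
    HasPowerTail μ (fun ω => b * Y ω) α (b ^ α * c) := by
  rcases hb.eq_or_lt with rfl | hb
  · refine tendsto_const_nhds.congr' ?_
    filter_upwards [eventually_ge_atTop 0] with x hx
    simp [Real.zero_rpow hα, hx.not_gt]
  · refine ((hY.comp (tendsto_id.atTop_div_const hb)).const_mul (b ^ α)).congr' ?_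
    filter_upwards [eventually_ge_atTop 0] with x hx
    exact (rpow_mul_measureReal_lt_const_mul hb hx).symm

theorem HasPowerTail.exists_rpow_mul_measureReal_le [IsFiniteMeasure μ]
    (hY : HasPowerTail μ Y α c) (hα : 0 ≤ α) :
    ∃ M, ∀ x, 0 < x → x ^ α * μ.real {ω | x < Y ω} ≤ M := by
  obtain ⟨K, hK⟩ := hY.isBoundedUnder_le
  obtain ⟨N, hN⟩ := eventually_atTop.1 (eventually_map.1 hK)
  refine ⟨max K (N ^ α * μ.real univ), fun x hx => ?_⟩
  rcases le_total N x with hNx | hxN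
  · exact le_max_of_le_left (hN x hNx)
  · have hN_nonneg : 0 ≤ N := hx.le.trans hxN
    refine le_max_of_le_right ?_
    have h_le_univ : μ.real {ω | x < Y ω} ≤ μ.real univ := measureReal_mono (subset_univ _)
    gcongr

theorem HasPowerTail.exists_rpow_mul_measureReal_const_mul_le [IsFiniteMeasure μ]
    (hY : HasPowerTail μ Y α c) (hα : 0 ≤ α) :
    ∃ M, ∀ b x, 0 ≤ b → 0 < x → x ^ α * μ.real {ω | x < b * Y ω} ≤ b ^ α * M := by
  obtain ⟨M, hM⟩ := hY.exists_rpow_mul_measureReal_le hα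
  have hM_nonneg : 0 ≤ M := le_trans (by positivity) (hM 1 one_pos)
  refine ⟨M, fun b x hb hx => ?_⟩
  rcases hb.eq_or_lt with rfl | hb
  · simpa [hx.not_gt] using mul_nonneg (Real.rpow_nonneg le_rfl α) hM_nonneg
  · rw [rpow_mul_measureReal_lt_const_mul hb hx.le]
    gcongr
    exact hM _ (div_pos hx hb)

theorem hasPowerTail_rpow_neg_one_div {X : Ω → ℝ} (hα : 0 < α) (hX : ∀ᵐ ω ∂μ, 0 < X ω)
    (hc : Tendsto (fun t : ℝ => t⁻¹ * μ.real {ω | X ω < t}) (𝓝[>] 0) (𝓝 c)) :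
    HasPowerTail μ (fun ω => X ω ^ (-(1 / α))) α c := by
  have h_inv : Tendsto (fun x : ℝ => (x ^ α)⁻¹) atTop (𝓝[>] 0) :=
    tendsto_inv_atTop_nhdsGT_zero.comp (tendsto_rpow_atTop hα)
  refine (hc.comp h_inv).congr' ?_
  filter_upwards [eventually_gt_atTop 0] with x hx
  have h_event : {ω | X ω < (x ^ α)⁻¹} =ᵐ[μ] {ω | x < X ω ^ (-(1 / α))} := by
    filter_upwards [hX] with ω hω
    refine propext (?_ : X ω < (x ^ α)⁻¹ ↔ x < X ω ^ (-(1 / α)))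
    rw [← Real.rpow_neg hx.le, one_div, ← inv_neg,
      Real.lt_rpow_inv_iff_of_neg hx hω (neg_neg_of_pos hα)]
  simp only [Function.comp_apply, inv_inv, measureReal_congr h_event]

end PowerTail

section Breiman

section Independence

variable {β γ : Type*} [MeasurableSpace β] [MeasurableSpace γ] {f : Ω → β} {g : Ω → γ}
  {s : Set (β × γ)}

theorem measureReal_prodMk_mem_eq_map (hg : AEMeasurable g μ) (hs : MeasurableSet s) (b : β) :
    μ.real {ω | (b, g ω) ∈ s} = (μ.map g).real (Prod.mk b ⁻¹' s) :=
  (map_measureReal_apply_of_aemeasurable hg (measurable_prodMk_left hs)).symm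

theorem measurable_measureReal_prodMk_mem [SFinite μ] (hg : AEMeasurable g μ)
    (hs : MeasurableSet s) :
    Measurable fun b => μ.real {ω | (b, g ω) ∈ s} := by
  simp only [measureReal_prodMk_mem_eq_map hg hs]
  exact (measurable_measure_prodMk_left hs).ennreal_toReal

theorem measureReal_prodMk_mem_of_indepFun [IsFiniteMeasure μ] (hf : AEMeasurable f μ)
    (hg : AEMeasurable g μ) (hfg : IndepFun f g μ) (hs : MeasurableSet s) :
    μ.real {ω | (f ω, g ω) ∈ s} = ∫ ω, μ.real {ω' | (f ω, g ω') ∈ s} ∂μ := by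
  have h_meas : Measurable fun b => μ.map g (Prod.mk b ⁻¹' s) := measurable_measure_prodMk_left hs
  calc μ.real {ω | (f ω, g ω) ∈ s}
      = ((μ.map f).prod (μ.map g)).real s := by
        rw [← hfg.map_prod_eq_prod_map_map hf hg]
        exact (map_measureReal_apply_of_aemeasurable (hf.prodMk hg) hs).symm
    _ = ∫ b, (μ.map g).real (Prod.mk b ⁻¹' s) ∂(μ.map f) := by
        rw [measureReal_def, Measure.prod_apply hs]
        exact (integral_toReal h_meas.aemeasurable (ae_of_all _ fun b => measure_lt_top _ _)).symm
    _ = ∫ ω, (μ.map g).real (Prod.mk (f ω) ⁻¹' s) ∂μ :=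
        integral_map hf h_meas.ennreal_toReal.aestronglyMeasurable
    _ = ∫ ω, μ.real {ω' | (f ω, g ω') ∈ s} ∂μ := by
        simp only [measureReal_prodMk_mem_eq_map hg hs]

end Independence

variable [IsFiniteMeasure μ] {A B Y : Ω → ℝ} {α c : ℝ}

theorem HasPowerTail.mul_of_indepFun (hY : HasPowerTail μ Y α c) (hα : 0 < α)
    (hBm : AEMeasurable B μ) (hYm : AEMeasurable Y μ) (hBY : IndepFun B Y μ)
    (hB : ∀ᵐ ω ∂μ, 0 ≤ B ω) (hBα : Integrable (fun ω => B ω ^ α) μ) :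
    HasPowerTail μ (fun ω => B ω * Y ω) α ((∫ ω, B ω ^ α ∂μ) * c) := by
  have h_set (x : ℝ) : MeasurableSet {p : ℝ × ℝ | x < p.1 * p.2} :=
    measurableSet_lt measurable_const (by fun_prop)
  have h_cond (x : ℝ) : x ^ α * μ.real {ω | x < B ω * Y ω} =
      ∫ ω, x ^ α * μ.real {ω' | x < B ω * Y ω'} ∂μ := by
    rw [integral_const_mul]
    exact congrArg _ (measureReal_prodMk_mem_of_indepFun hBm hYm hBY (h_set x))
  obtain ⟨M, hM⟩ := hY.exists_rpow_mul_measureReal_const_mul_le hα.le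
  rw [HasPowerTail, ← integral_mul_const]
  simp only [h_cond]
  refine tendsto_integral_filter_of_dominated_convergence (fun ω => B ω ^ α * M) ?_ ?_
    (hBα.mul_const M) ?_
  · exact Eventually.of_forall fun x => (((measurable_measureReal_prodMk_mem hYm
      (h_set x)).comp_aemeasurable hBm).const_mul _).aestronglyMeasurable
  · filter_upwards [eventually_gt_atTop 0] with x hx
    filter_upwards [hB] with ω hω
    rw [Real.norm_of_nonneg (by positivity)]
    exact hM _ _ hω hx
  · filter_upwards [hB] with ω hω
    exact hY.const_mul hα.ne' hω

theorem lt_mul_and_lt_iff_lt_min_one_mul {a x y : ℝ} (ha : 0 ≤ a) (hx : 0 ≤ x) :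
    x < a * y ∧ x < y ↔ x < min a 1 * y := by
  rcases le_total 0 y with hy | hy
  · rw [min_mul_of_nonneg _ _ hy, one_mul, lt_min_iff]
  · have h_min : min a 1 * y ≤ 0 := mul_nonpos_of_nonneg_of_nonpos (le_min ha zero_le_one) hy
    exact iff_of_false (fun h => (hy.trans hx).not_gt h.2) (h_min.trans hx).not_gt

theorem integrable_min_one_rpow (hα : 0 ≤ α) (hAm : AEMeasurable A μ) (hA : ∀ᵐ ω ∂μ, 0 ≤ A ω) :
    Integrable (fun ω => min (A ω) 1 ^ α) μ := by
  refine Integrable.of_bound (by fun_prop) 1 ?_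
  filter_upwards [hA] with ω hω
  have h_min : 0 ≤ min (A ω) 1 := le_min hω zero_le_one
  rw [Real.norm_of_nonneg (Real.rpow_nonneg h_min α)]
  exact Real.rpow_le_one h_min (min_le_right _ _) hα

theorem integral_min_one_rpow (hα : 0 ≤ α) (hAm : AEMeasurable A μ) (hA : ∀ᵐ ω ∂μ, 0 ≤ A ω) :
    ∫ ω, min (A ω) 1 ^ α ∂μ = (∫ ω in {ω | A ω ≤ 1}, A ω ^ α ∂μ) + μ.real {ω | 1 < A ω} := by
  have h_le : NullMeasurableSet {ω | A ω ≤ 1} μ := nullMeasurableSet_le hAm aemeasurable_const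
  have h_compl : {ω | A ω ≤ 1}ᶜ = {ω | 1 < A ω} := by ext; simp
  rw [← integral_add_compl₀ h_le (integrable_min_one_rpow hα hAm hA), h_compl]
  congr 1
  · refine setIntegral_congr_fun₀ h_le fun ω (hω : A ω ≤ 1) => ?_
    simp only [min_eq_left hω]
  · calc ∫ ω in {ω | 1 < A ω}, min (A ω) 1 ^ α ∂μ
        = ∫ _ in {ω | 1 < A ω}, (1 : ℝ) ∂μ := by
          refine setIntegral_congr_fun₀ (h_compl ▸ h_le.compl) fun ω (hω : 1 < A ω) => ?_
          simp only [min_eq_right hω.le, Real.one_rpow]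
      _ = μ.real {ω | 1 < A ω} := by simp

theorem stmt11_general (hY : HasPowerTail μ Y α c) (hα : 0 < α)
    (hAm : AEMeasurable A μ) (hYm : AEMeasurable Y μ) (hAY : IndepFun A Y μ)
    (hA : ∀ᵐ ω ∂μ, 0 ≤ A ω) :
    Tendsto (fun x : ℝ => x ^ α * μ.real {ω | x < A ω * Y ω ∧ x < Y ω}) atTop
      (𝓝 (((∫ ω in {ω | A ω ≤ 1}, A ω ^ α ∂μ) + μ.real {ω | 1 < A ω}) * c)) := by
  have h_indep : IndepFun (fun ω => min (A ω) 1) Y μ :=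
    hAY.comp (measurable_id.min measurable_const) measurable_id
  have h_nonneg : ∀ᵐ ω ∂μ, 0 ≤ min (A ω) 1 := hA.mono fun ω hω => le_min hω zero_le_one
  have h_tail := hY.mul_of_indepFun hα (hAm.min aemeasurable_const) hYm h_indep h_nonneg
    (integrable_min_one_rpow hα.le hAm hA)
  rw [integral_min_one_rpow hα.le hAm hA] at h_tail
  refine h_tail.congr' ?_
  filter_upwards [eventually_ge_atTop 0] with x hx
  congr 1
  refine measureReal_congr ?_
  filter_upwards [hA] with ω hω
  exact propext (lt_mul_and_lt_iff_lt_min_one_mul hω hx).symm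

end Breiman

section Exponential

theorem expMeasure_real_Iic {r t : ℝ} (hr : 0 < r) (ht : 0 ≤ t) :
    (expMeasure r).real (Iic t) = 1 - Real.exp (-(r * t)) := by
  have := isProbabilityMeasure_expMeasure hr
  rw [← cdf_eq_real, cdf_expMeasure_eq hr, if_pos ht]

theorem ae_pos_expMeasure {r : ℝ} (hr : 0 < r) : ∀ᵐ t ∂expMeasure r, 0 < t := by
  have := isProbabilityMeasure_expMeasure hr
  have h_zero : expMeasure r (Iic 0) = 0 := by
    rw [← measureReal_eq_zero_iff, expMeasure_real_Iic hr le_rfl]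
    simp
  simpa [ae_iff, Iic] using h_zero

theorem expMeasure_real_Iio {r t : ℝ} (hr : 0 < r) (ht : 0 ≤ t) :
    (expMeasure r).real (Iio t) = 1 - Real.exp (-(r * t)) := by
  have : NullSingletonClass (expMeasure r) :=
    inferInstanceAs (NullSingletonClass (volume.withDensity _))
  rw [measureReal_congr Iio_ae_eq_Iic, expMeasure_real_Iic hr ht]

theorem tendsto_inv_mul_expMeasure_real_Iio {r : ℝ} (hr : 0 < r) :
    Tendsto (fun t => t⁻¹ * (expMeasure r).real (Iio t)) (𝓝[>] 0) (𝓝 r) := by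
  have h_deriv : HasDerivAt (fun t : ℝ => 1 - Real.exp (-(r * t))) r 0 := by
    simpa [← sub_eq_add_neg] using (hasDerivAt_neg_exp_mul_exp (r := r) (x := 0)).const_add 1
  refine h_deriv.tendsto_slope_zero_right.congr' ?_
  filter_upwards [self_mem_nhdsWithin] with t ht
  simp [expMeasure_real_Iio hr (le_of_lt ht)]

theorem hasPowerTail_rpow_of_map_eq_expMeasure {X : Ω → ℝ} {α r : ℝ} (hα : 0 < α) (hr : 0 < r)
    (hXm : AEMeasurable X μ) (hX : μ.map X = expMeasure r) :
    HasPowerTail μ (fun ω => X ω ^ (-(1 / α))) α r := by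
  refine hasPowerTail_rpow_neg_one_div hα (ae_of_ae_map hXm (hX ▸ ae_pos_expMeasure hr)) ?_
  refine (tendsto_inv_mul_expMeasure_real_Iio hr).congr fun t => ?_
  rw [← hX, map_measureReal_apply_of_aemeasurable hXm measurableSet_Iio]
  rfl

end Exponential

end

/-- Let `α > 0`, `X` exponentially distributed with rate 1, and `A ≥ 0`
independent of `X` with `E[A^(α+δ)] < ∞` for some `δ > 0`.  Then
`x^α · P(A·X^(−1/α) > x, X^(−1/α) > x) → E[A^α 1_{A ≤ 1}] + P(A > 1)` as `x → ∞`. -/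
theorem stmt11 {Ω : Type*} [MeasurableSpace Ω] (μ : Measure Ω) [IsProbabilityMeasure μ]
    (α : ℝ) (hα : 0 < α)
    (X : Ω → ℝ) (hXmeas : Measurable X)
    (hX : Measure.map X μ = expMeasure 1)
    (A : Ω → ℝ) (hAmeas : Measurable A) (hApos : ∀ ω, 0 ≤ A ω)
    (hindep : IndepFun A X μ)
    (hmom : ∃ δ : ℝ, 0 < δ ∧ Integrable (fun ω => A ω ^ (α + δ)) μ) :
    Tendsto (fun x : ℝ => x ^ α *
        (μ {ω | x < A ω * X ω ^ (-(1 / α)) ∧ x < X ω ^ (-(1 / α))}).toReal) atTop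
      (𝓝 ((∫ ω in {ω | A ω ≤ 1}, A ω ^ α ∂μ) + (μ {ω | 1 < A ω}).toReal)) := by
  have h_rpow : Measurable fun t : ℝ => t ^ (-(1 / α)) := by fun_prop
  have hY := hasPowerTail_rpow_of_map_eq_expMeasure hα one_pos hXmeas.aemeasurable hX
  simpa only [mul_one, measureReal_def] using stmt11_general hY hα hAmeas.aemeasurable
    (h_rpow.comp hXmeas).aemeasurable (hindep.comp measurable_id h_rpow) (ae_of_all μ hApos)
end
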